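/- For the planar Fadell–Neuwirth fibration p : F(ℝ², m+n) → F(ℝ², m) with m ≥ 2, n ≥ 1 and r ≥ 2, one has TC_r[p] = rn + m − 2. -/

import Mathlib

open Set unitInterval

universe u v

/-- `HasSecatLE p k`: the base admits an open cover by `k+1` sets,
each admitting a continuous local section of `p`. -/
def HasSecatLE {E : Type u} {B : Type v} [TopologicalSpace E] [TopologicalSpace B]
    (p : E → B) (k : ℕ) : Prop :=
  ∃ U : Fin (k + 1) → Set B, (∀ i, IsOpen (U i)) ∧ (⋃ i, U i) = Set.univ ∧
    ∀ i, ∃ s : C(U i, E), ∀ x : U i, p (s x) = (x : B)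

/-- The sectional category (Schwarz genus) of a map, valued in `ℕ∞`. -/
noncomputable def secat {E : Type u} {B : Type v} [TopologicalSpace E] [TopologicalSpace B]
    (p : E → B) : ℕ∞ :=
  ⨅ k ∈ {k : ℕ | HasSecatLE p k}, (k : ℕ∞)

/-- A Hurewicz fibration: a continuous map with the homotopy lifting property
with respect to all spaces. -/
def IsHurewiczFibration {E : Type u} {B : Type v} [TopologicalSpace E] [TopologicalSpace B]
    (p : E → B) : Prop :=
  Continuous p ∧
    ∀ (Z : Type (max u v)) [TopologicalSpace Z] (H : C(Z × unitInterval, B)) (h : C(Z, E)),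
      (∀ z, p (h z) = H (z, 0)) →
        ∃ H' : C(Z × unitInterval, E), (∀ z, H' (z, 0) = h z) ∧ ∀ q, p (H' q) = H q

/-- The standard time schedule `t_i = i/(r-1)`, `i = 0, …, r-1` in `[0,1]`. -/
noncomputable def schedule (r : ℕ) (i : Fin r) : unitInterval :=
  Set.projIcc 0 1 zero_le_one ((i : ℝ) / ((r : ℝ) - 1))

/-- The space `E^I_B` of paths in `E` along which `p` is constant. -/
def FibConstPath {E : Type u} {B : Type v} [TopologicalSpace E] [TopologicalSpace B]
    (p : E → B) : Set C(unitInterval, E) :=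
  {α | ∀ s t, p (α s) = p (α t)}

/-- The space `E^r_B` of `r`-tuples in `E` lying in a common fibre of `p`. -/
def ParamSpace {E : Type u} {B : Type v} [TopologicalSpace E] [TopologicalSpace B]
    (p : E → B) (r : ℕ) : Set (Fin r → E) :=
  {e | ∀ i j, p (e i) = p (e j)}

/-- The evaluation fibration `Π_r : E^I_B → E^r_B`. -/
noncomputable def paramEval {E : Type u} {B : Type v} [TopologicalSpace E] [TopologicalSpace B]
    (p : E → B) (r : ℕ) (α : FibConstPath p) : ParamSpace p r :=
  ⟨fun i => α.1 (schedule r i), fun _ _ => α.2 _ _⟩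

/-- The `r`-th sequential parametrized topological complexity `TC_r[p : E → B]`. -/
noncomputable def seqParamTC {E : Type u} {B : Type v} [TopologicalSpace E] [TopologicalSpace B]
    (p : E → B) (r : ℕ) : ℕ∞ :=
  secat (paramEval p r)

/-- The `r`-th sequential topological complexity `TC_r(X)` of a space. -/
noncomputable def seqTC (X : Type u) [TopologicalSpace X] (r : ℕ) : ℕ∞ :=
  secat (fun (α : C(unitInterval, X)) (i : Fin r) => α (schedule r i))

/-- `HasCatLE Y k`: `Y` admits an open cover by `k+1` sets each contractible in `Y`. -/
def HasCatLE (Y : Type u) [TopologicalSpace Y] (k : ℕ) : Prop :=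
  ∃ U : Fin (k + 1) → Set Y, (∀ i, IsOpen (U i)) ∧ (⋃ i, U i) = Set.univ ∧
    ∀ i, ∃ (H : C((U i) × unitInterval, Y)) (y : Y),
      (∀ x, H (x, 0) = (x.1 : Y)) ∧ (∀ x, H (x, 1) = y)

/-- The Lusternik–Schnirelmann category of a space, valued in `ℕ∞`. -/
noncomputable def LScat (Y : Type u) [TopologicalSpace Y] : ℕ∞ :=
  ⨅ k ∈ {k : ℕ | HasCatLE Y k}, (k : ℕ∞)

/-- The ordered configuration space `F(ℝ^d, N)` of `N` distinct points in `ℝ^d`. -/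
abbrev Conf (d N : ℕ) : Type :=
  {u : Fin N → EuclideanSpace ℝ (Fin d) // Function.Injective u}

/-- The Fadell–Neuwirth fibration `F(ℝ^d, m+n) → F(ℝ^d, m)` forgetting the last `n` points. -/
def fnProj (d m n : ℕ) (u : Conf d (m + n)) : Conf d m :=
  ⟨fun i => u.1 (Fin.castAdd n i), fun a b h => by
    have h2 : Fin.castAdd n a = Fin.castAdd n b := u.2 h
    exact Fin.ext (by simpa using congrArg Fin.val h2)⟩

/-!
Lower bound. Over an open set on which `Π_r` has a section, the difference of two points of the
first configuration, divided by the corresponding difference in another configuration of the same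
element of `E^r_B`, is homotopic to `1` through nonvanishing functions and so has a continuous
logarithm. Restrict this to a torus of dimension `r n + m - 2` in `E^r_B`, with one angle for each
moving point of each configuration and one for each base point after the first two. Letting the
moving points of one configuration circle about the second base point and all the others about the
first, the quotients give logarithms of all the coordinates. By cup length, a torus of dimension `d`
is not covered by `d` open sets on the `l`-th of which the `l`-th coordinate has a logarithm. The
cup product is computed on a fine lattice of torsion points: the product of `d` independent
`1`-cochains would vanish pointwise, but its sum over the lattice is a nonzero multiple of the
volume form.

Upper bound. The affine coordinate in which the first two base points are `0` and `1` reduces the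
problem to `m - 2 + r n` further points of the plane. Stratify by the number of distinct real parts,
from `2` to `r n + m`, and thicken the strata to open sets by clustering the real parts. On a
stratum, every moving point travels to the right within its own cluster, then up above all points,
and then to the imaginary axis, where its position no longer depends on the configuration it
belongs to. Moving the configurations there and back gives a section of `Π_r`.
-/

namespace FadellNeuwirth

section Secat

variable {E B : Type*} [TopologicalSpace E] [TopologicalSpace B]

/-- A continuous local section of `p` over `U`, as required of the members of the covers in
`HasSecatLE`. -/
def HasLocalSection (p : E → B) (U : Set B) : Prop :=
  ∃ s : C(U, E), ∀ x : U, p (s x) = x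

theorem HasLocalSection.iUnion {ι : Type*} {p : E → B} {V : ι → Set B}
    (hopen : ∀ i, IsOpen (V i)) (hdisj : Pairwise fun i j => Disjoint (V i) (V j))
    (hsec : ∀ i, HasLocalSection p (V i)) : HasLocalSection p (⋃ i, V i) := by
  choose s hs using hsec
  let W (i : ι) : Set (⋃ i, V i) := Subtype.val ⁻¹' V i
  let φ (i : ι) : C(W i, E) := (s i).comp ⟨fun x => ⟨x.1.1, x.2⟩, by fun_prop⟩
  have hφ (i j : ι) (x) (hi : x ∈ W i) (hj : x ∈ W j) : φ i ⟨x, hi⟩ = φ j ⟨x, hj⟩ := by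
    obtain rfl : i = j := by_contra fun hij => (hdisj hij).ne_of_mem hi hj rfl
    rfl
  have hW (x : ⋃ i, V i) : ∃ i, W i ∈ nhds x := by
    obtain ⟨i, hi⟩ := mem_iUnion.mp x.2
    exact ⟨i, ((hopen i).preimage continuous_subtype_val).mem_nhds hi⟩
  refine ⟨ContinuousMap.liftCover W φ hφ hW, fun x => ?_⟩
  obtain ⟨i, hi⟩ := mem_iUnion.mp x.2
  have hx : ContinuousMap.liftCover W φ hφ hW x = s i ⟨x, hi⟩ :=
    ContinuousMap.liftCover_coe (⟨x, hi⟩ : W i)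
  rw [hx, hs]

theorem hasSecatLE_of_strata {κ : Type*} {p : E → B} {k : ℕ} (V : κ → Set B) (d : κ → ℕ)
    (hd : ∀ i, d i ≤ k) (hopen : ∀ i, IsOpen (V i)) (hcover : ∀ x, ∃ i, x ∈ V i)
    (hdisj : ∀ i j, d i = d j → i ≠ j → Disjoint (V i) (V j))
    (hsec : ∀ i, HasLocalSection p (V i)) : HasSecatLE p k := by
  refine ⟨fun l => ⋃ i : {i // d i = l}, V i, fun l => isOpen_iUnion fun i => hopen i,
    eq_univ_of_forall fun x => ?_, fun l => ?_⟩
  · obtain ⟨i, hi⟩ := hcover x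
    exact mem_iUnion.mpr ⟨⟨d i, Nat.lt_succ_of_le (hd i)⟩, mem_iUnion.mpr ⟨⟨i, rfl⟩, hi⟩⟩
  · exact HasLocalSection.iUnion (fun i => hopen i)
      (fun i j hij => hdisj i j (i.2.trans j.2.symm) fun h => hij (Subtype.ext h))
      fun i => hsec i

theorem exists_fin_abs_sub_le_half {r : ℕ} {τ : ℝ} (h0 : 0 ≤ τ) (h1 : τ ≤ r - 1) :
    ∃ a : Fin r, |τ - a| ≤ 1 / 2 := by
  have hle := Nat.floor_le (show 0 ≤ τ + 1 / 2 by linarith)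
  have hlt := Nat.lt_floor_add_one (τ + 1 / 2)
  have hr : ⌊τ + 1 / 2⌋₊ < r := by
    rw [← Nat.cast_lt (α := ℝ)]
    linarith
  exact ⟨⟨_, hr⟩, abs_le.mpr ⟨by dsimp only; linarith, by dsimp only; linarith⟩⟩

theorem two_mul_abs_sub_eq_one {a b : ℕ} (hab : a ≠ b) {τ : ℝ} (ha : |τ - a| ≤ 1 / 2)
    (hb : |τ - b| ≤ 1 / 2) : 2 * |τ - a| = 1 := by
  have hsep : (1 : ℝ) ≤ |(a : ℝ) - b| := by
    exact_mod_cast Int.one_le_abs (sub_ne_zero.mpr (Nat.cast_injective.ne hab))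
  have htri := abs_sub_le (a : ℝ) τ b
  rw [abs_sub_comm (a : ℝ) τ] at htri
  linarith

theorem coe_schedule_mul {r : ℕ} (a : Fin r) : (schedule r a : ℝ) * (r - 1) = a := by
  have har : (a : ℝ) ≤ r - 1 := by
    rw [le_sub_iff_add_le]
    exact_mod_cast a.2
  have ha : (0 : ℝ) ≤ a := Nat.cast_nonneg _
  have hmem : (a : ℝ) / (r - 1) ∈ Icc (0 : ℝ) 1 :=
    ⟨div_nonneg ha (ha.trans har), div_le_one_of_le₀ har (ha.trans har)⟩
  rw [schedule, projIcc_of_mem _ hmem]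
  exact div_mul_cancel_of_imp fun h => le_antisymm (har.trans h.le) ha

/-- Around the time `schedule r a`, traverse the `a`-th path backwards and then forwards: this is
continuous because all the paths have ended in `c` when the index of the nearest time changes. -/
theorem exists_joining_path {X : Type*} [TopologicalSpace X] {r : ℕ} [NeZero r]
    (H : Fin r → C(X × I, E)) (c : X → E) (hc : ∀ a x, H a (x, 1) = c x) :
    ∃ G : C(X × I, E), (∀ a x, G (x, schedule r a) = H a (x, 0)) ∧
      ∀ x t, ∃ a s, G (x, t) = H a (x, s) := by
  let τ (t : I) : ℝ := t * (r - 1)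
  have hτ : Continuous τ := by fun_prop
  let K (a : Fin r) (y : X × I) : E :=
    H a (y.1, projIcc 0 1 zero_le_one (2 * |τ y.2 - a|))
  have hKcont (a : Fin r) : Continuous (K a) := by fun_prop
  have hnear (t : I) : ∃ a : Fin r, |τ t - a| ≤ 1 / 2 := by
    have hr : (1 : ℝ) ≤ r := mod_cast NeZero.one_le
    exact exists_fin_abs_sub_le_half (mul_nonneg t.2.1 (by linarith))
      (mul_le_of_le_one_left (by linarith) t.2.2)
  choose ν hν using hnear
  have hKeq (a : Fin r) (y : X × I) (ha : |τ y.2 - a| ≤ 1 / 2) : K (ν y.2) y = K a y := by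
    by_cases hνa : ν y.2 = a
    · rw [hνa]
    have hνa' : (ν y.2 : ℕ) ≠ a := Fin.val_ne_iff.mpr hνa
    simp only [K, two_mul_abs_sub_eq_one hνa' (hν y.2) ha,
      two_mul_abs_sub_eq_one hνa'.symm ha (hν y.2), projIcc_right]
    exact (hc _ _).trans (hc _ _).symm
  have hclosed (a : Fin r) : IsClosed {y : X × I | |τ y.2 - a| ≤ 1 / 2} :=
    isClosed_le (by fun_prop) continuous_const
  have hGcont : Continuous fun y : X × I => K (ν y.2) y :=
    (locallyFinite_of_finite _).continuous
      (eq_univ_of_forall fun y => mem_iUnion.mpr ⟨ν y.2, hν y.2⟩) hclosed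
      fun a => (hKcont a).continuousOn.congr fun y hy => hKeq a y hy
  refine ⟨⟨_, hGcont⟩, fun a x => ?_, fun x t => ⟨ν t, _, rfl⟩⟩
  have hτa : τ (schedule r a) - a = 0 := sub_eq_zero.mpr (coe_schedule_mul a)
  calc K (ν (schedule r a)) (x, schedule r a)
      = K a (x, schedule r a) := hKeq a (x, schedule r a) (by simp [hτa])
    _ = H a (x, 0) := by simp only [K, hτa, abs_zero, mul_zero, projIcc_left]; rfl

theorem hasLocalSection_paramEval {p : E → B} {r : ℕ} [NeZero r] {U : Set (ParamSpace p r)}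
    (H : Fin r → C(U × I, E)) (c : U → E) (h0 : ∀ a e, H a (e, 0) = e.1.1 a)
    (hc : ∀ a e, H a (e, 1) = c e) (hp : ∀ a e t, p (H a (e, t)) = p (e.1.1 0)) :
    HasLocalSection (paramEval p r) U := by
  obtain ⟨G, hG0, hG⟩ := exists_joining_path H c hc
  have hGp (e : U) (t : I) : p (G (e, t)) = p (e.1.1 0) := by
    obtain ⟨a, s, has⟩ := hG e t
    rw [has, hp]
  refine ⟨⟨fun e => ⟨G.curry e, fun s t => (hGp e s).trans (hGp e t).symm⟩, by fun_prop⟩,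
    fun e => ?_⟩
  ext a
  exact (hG0 a e).trans (h0 a e)

end Secat

section CupProduct

variable {R ι L κ : Type*} [CommRing R] [AddCommGroup L] (b : ι → L)

/-- The `1`-cochain with constant coefficients `a` plus the differential of `h`: the discrete
closed forms with periods `a`. -/
def periodCochain (a : ι → R) (h : L → R) (z : L) (i : ι) : R :=
  a i + (h (z + b i) - h z)

theorem periodCochain_cocycle (a : ι → R) (h : L → R) (z : L) (i j : ι) :
    periodCochain b a h z i + periodCochain b a h (z + b i) j =
      periodCochain b a h z j + periodCochain b a h (z + b j) i := by
  rw [periodCochain, periodCochain, periodCochain, periodCochain, add_right_comm z]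
  ring

variable [DecidableEq ι]

/-- The generator of the exterior algebra dual to the `i`-th direction: the discrete counterpart of
the differential form `dx i`. -/
def dx (R : Type*) [CommRing R] (i : ι) : ExteriorAlgebra R (ι → R) :=
  ExteriorAlgebra.ι R (Pi.single i 1)

variable [Fintype ι]

theorem sum_smul_dx (a : ι → R) : ∑ i, a i • dx R i = ExteriorAlgebra.ι R a := by
  conv_rhs => rw [pi_eq_sum_univ' a, map_sum]
  simp only [map_smul]
  rfl

theorem sum_dx_mul_dx_mul_eq_zero (g : ι → ι → ExteriorAlgebra R (ι → R))
    (hg : ∀ i j, g i j = g j i) : ∑ i, ∑ j, dx R i * dx R j * g i j = 0 := by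
  rw [← Fintype.sum_prod_type' fun i j => dx R i * dx R j * g i j]
  refine Finset.sum_involution (fun x _ => x.swap) (fun x _ => ?_) (fun x _ hx hswap => hx ?_)
    (fun _ _ => Finset.mem_univ _) (fun _ _ => Prod.swap_swap _)
  · rw [Prod.fst_swap, Prod.snd_swap, hg x.2, ← add_mul, dx, dx,
      ExteriorAlgebra.ι_add_mul_swap, zero_mul]
  · have hdiag : x.2 = x.1 := congrArg Prod.fst hswap
    rw [hdiag, dx, ExteriorAlgebra.ι_sq_zero, zero_mul]

/-- The discrete exterior derivative of an `ExteriorAlgebra`-valued function on the lattice `L`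
with steps `b i`. -/
def coboundary (ω : L → ExteriorAlgebra R (ι → R)) (z : L) : ExteriorAlgebra R (ι → R) :=
  ∑ i, dx R i * (ω (z + b i) - ω z)

/-- The discrete cup product of the `1`-cochain `∑ i, α · i • dx i` with `ω`. -/
def cupOne (α : L → ι → R) (ω : L → ExteriorAlgebra R (ι → R)) (z : L) :
    ExteriorAlgebra R (ι → R) :=
  ∑ i, α z i • (dx R i * ω (z + b i))

variable {b}

theorem coboundary_cupOne {α : L → ι → R}
    (hα : ∀ z i j, α z i + α (z + b i) j = α z j + α (z + b j) i)
    {ω : L → ExteriorAlgebra R (ι → R)} (hω : ∀ z, coboundary b ω z = 0) (z : L) :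
    coboundary b (cupOne b α ω) z = 0 := by
  have hleibniz : coboundary b (cupOne b α ω) z
        + ∑ i, α z i • (dx R i * coboundary b ω (z + b i)) =
      ∑ i, ∑ j, dx R i * dx R j * ((α z i + α (z + b i) j) • ω (z + b i + b j))
      - ∑ i, ∑ j, dx R i * dx R j * (α z i • ω (z + b i) + α z j • ω (z + b j)) := by
    simp only [coboundary, cupOne, Finset.mul_sum, Finset.smul_sum, mul_sub,
      ← Finset.sum_sub_distrib, ← Finset.sum_add_distrib]
    refine Finset.sum_congr rfl fun i _ => Finset.sum_congr rfl fun j _ => ?_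
    simp only [mul_add, add_smul, smul_sub, mul_smul_comm, mul_assoc]
    abel
  simp only [hω, mul_zero, smul_zero, Finset.sum_const_zero, add_zero] at hleibniz
  rw [hleibniz, sum_dx_mul_dx_mul_eq_zero _ fun i j => by rw [hα, add_right_comm],
    sum_dx_mul_dx_mul_eq_zero _ fun i j => add_comm _ _, sub_zero]

theorem sum_cupOne_periodCochain [Fintype L] (a : ι → R) (h : L → R)
    {ω : L → ExteriorAlgebra R (ι → R)} (hω : ∀ z, coboundary b ω z = 0) :
    ∑ z, cupOne b (periodCochain b a h) ω z = ExteriorAlgebra.ι R a * ∑ z, ω z := by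
  have hshift (i : ι) (f : L → ExteriorAlgebra R (ι → R)) : ∑ z, f (z + b i) = ∑ z, f z :=
    Equiv.sum_comp (Equiv.addRight (b i)) f
  have hexpand (z : L) : cupOne b (periodCochain b a h) ω z = h z • -coboundary b ω z +
      ∑ i, (a i • (dx R i * ω (z + b i)) +
        dx R i * (h (z + b i) • ω (z + b i) - h z • ω z)) := by
    simp only [cupOne, periodCochain, coboundary, ← Finset.sum_neg_distrib, Finset.smul_sum,
      ← Finset.sum_add_distrib]
    refine Finset.sum_congr rfl fun i _ => ?_
    simp only [add_smul, sub_smul, mul_sub, smul_sub, smul_neg, mul_smul_comm]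
    abel
  simp only [hexpand, hω, neg_zero, smul_zero, zero_add]
  rw [Finset.sum_comm, ← sum_smul_dx, Finset.sum_mul]
  refine Finset.sum_congr rfl fun i _ => ?_
  rw [Finset.sum_add_distrib, ← Finset.smul_sum, ← Finset.mul_sum, ← Finset.mul_sum,
    Finset.sum_sub_distrib, hshift i ω, hshift i fun z => h z • ω z, sub_self, mul_zero, add_zero,
    smul_mul_assoc]

variable (b)

/-- The iterated discrete cup product of the closed `1`-cochains with periods `a l`, for `l` in a
list. -/
def cupProd (a : κ → ι → R) (h : κ → L → R) : List κ → L → ExteriorAlgebra R (ι → R)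
  | [] => 1
  | l :: ls => cupOne b (periodCochain b (a l) (h l)) (cupProd a h ls)

theorem coboundary_cupProd (a : κ → ι → R) (h : κ → L → R) (ls : List κ) (z : L) :
    coboundary b (cupProd b a h ls) z = 0 := by
  induction ls generalizing z with
  | nil => simp [coboundary, cupProd]
  | cons l ls ih => exact coboundary_cupOne (periodCochain_cocycle b _ _) ih z

theorem sum_cupProd [Fintype L] (a : κ → ι → R) (h : κ → L → R) (ls : List κ) :
    ∑ z, cupProd b a h ls z =
      Fintype.card L • (ls.map fun l => ExteriorAlgebra.ι R (a l)).prod := by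
  induction ls with
  | nil => simp [cupProd]
  | cons l ls ih =>
    rw [cupProd, sum_cupOne_periodCochain _ _ (coboundary_cupProd b a h ls), ih, List.map_cons,
      List.prod_cons, mul_smul_comm]

theorem cupProd_eq_zero {a : κ → ι → R} {h : κ → L → R} {l : κ} {ls : List κ} (hl : l ∈ ls)
    {s : ℕ → Set L} (hstep : ∀ n, ∀ z ∈ s n, ∀ i, z + b i ∈ s (n + 1))
    (hvanish : ∀ n < ls.length, ∀ z ∈ s n, periodCochain b (a l) (h l) z = 0) {z : L}
    (hz : z ∈ s 0) : cupProd b a h ls z = 0 := by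
  induction ls generalizing s z with
  | nil => exact absurd hl List.not_mem_nil
  | cons l' ls ih =>
    refine Finset.sum_eq_zero fun i _ => ?_
    obtain rfl | hl := List.mem_cons.mp hl
    · rw [hvanish 0 (Nat.succ_pos _) z hz, Pi.zero_apply, zero_smul]
    · rw [ih (s := fun n => s (n + 1)) hl (fun n => hstep (n + 1))
        (fun n hn => hvanish (n + 1) (Nat.succ_lt_succ hn)) (hstep 0 z hz i), mul_zero, smul_zero]

theorem ιMulti_ne_zero {K M : Type*} [Field K] [AddCommGroup M] [Module K M] {n : ℕ}
    {v : Fin n → M} (hv : LinearIndependent K v) : ExteriorAlgebra.ιMulti K n v ≠ 0 := by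
  have hne := (exteriorPower.ιMulti_family_linearIndependent_field (n := n) hv).ne_zero
    (powersetCard.ofFinEmbEquiv (RelEmbedding.refl (· ≤ ·)))
  rwa [Ne, ← Submodule.coe_eq_zero, exteriorPower.ιMulti_family_apply_coe,
    ExteriorAlgebra.ιMulti_family, Equiv.symm_apply_apply] at hne

theorem exists_cupProd_ne_zero {K : Type*} [Field K] [CharZero K] [Finite L] {n : ℕ}
    {a : Fin n → ι → K} (ha : LinearIndependent K a) (h : Fin n → L → K) :
    ∃ z, cupProd b a h (List.finRange n) z ≠ 0 := by
  have := Fintype.ofFinite L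
  have hsum : ∑ z, cupProd b a h (List.finRange n) z ≠ 0 := by
    rw [sum_cupProd, ← List.ofFn_eq_map, ← ExteriorAlgebra.ιMulti_apply,
      ← Nat.cast_smul_eq_nsmul K]
    exact smul_ne_zero (Nat.cast_ne_zero.mpr Fintype.card_ne_zero) (ιMulti_ne_zero ha)
  simpa using Finset.exists_ne_zero_of_sum_ne_zero hsum

end CupProduct

section ContLog

open Complex

variable {X : Type*} [TopologicalSpace X]

/-- `f` has a continuous logarithm on `s`. -/
def HasContLogOn (f : X → ℂ) (s : Set X) : Prop :=
  ∃ g : X → ℂ, ContinuousOn g s ∧ ∀ x ∈ s, exp (g x) = f x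

variable {f f₁ f₂ : X → ℂ} {s : Set X}

theorem HasContLogOn.congr (h : HasContLogOn f₁ s) (hf : EqOn f₁ f₂ s) : HasContLogOn f₂ s := by
  obtain ⟨g, hg, hexp⟩ := h
  exact ⟨g, hg, fun x hx => (hexp x hx).trans (hf hx)⟩

theorem HasContLogOn.ne_zero (h : HasContLogOn f s) {x : X} (hx : x ∈ s) : f x ≠ 0 := by
  obtain ⟨g, -, hexp⟩ := h
  exact hexp x hx ▸ exp_ne_zero _

theorem HasContLogOn.mul (h₁ : HasContLogOn f₁ s) (h₂ : HasContLogOn f₂ s) :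
    HasContLogOn (fun x => f₁ x * f₂ x) s := by
  obtain ⟨g₁, hg₁, hexp₁⟩ := h₁
  obtain ⟨g₂, hg₂, hexp₂⟩ := h₂
  exact ⟨fun x => g₁ x + g₂ x, hg₁.add hg₂, fun x hx => by rw [exp_add, hexp₁ x hx, hexp₂ x hx]⟩

theorem HasContLogOn.div (h₁ : HasContLogOn f₁ s) (h₂ : HasContLogOn f₂ s) :
    HasContLogOn (fun x => f₁ x / f₂ x) s := by
  obtain ⟨g₁, hg₁, hexp₁⟩ := h₁
  obtain ⟨g₂, hg₂, hexp₂⟩ := h₂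
  exact ⟨fun x => g₁ x - g₂ x, hg₁.sub hg₂, fun x hx => by rw [exp_sub, hexp₁ x hx, hexp₂ x hx]⟩

theorem HasContLogOn.of_div (h : HasContLogOn (fun x => f₁ x / f₂ x) s) (h₂ : HasContLogOn f₂ s) :
    HasContLogOn f₁ s :=
  (h.mul h₂).congr fun _ hx => div_mul_cancel₀ _ (h₂.ne_zero hx)

theorem HasContLogOn.of_mul_left (h : HasContLogOn (fun x => f₁ x * f₂ x) s)
    (h₁ : HasContLogOn f₁ s) : HasContLogOn f₂ s :=
  (h.div h₁).congr fun _ hx => mul_div_cancel_left₀ _ (h₁.ne_zero hx)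

theorem HasContLogOn.of_slitPlane (hf : ContinuousOn f s) (hs : ∀ x ∈ s, f x ∈ slitPlane) :
    HasContLogOn f s :=
  ⟨fun x => log (f x), hf.clog hs, fun x hx => exp_log (slitPlane_ne_zero (hs x hx))⟩

theorem hasContLogOn_add_of_norm_lt {c : ℝ} (hf : ContinuousOn f s) (hs : ∀ x ∈ s, ‖f x‖ < c) :
    HasContLogOn (fun x => c + f x) s :=
  .of_slitPlane (continuousOn_const.add hf) fun x hx => Or.inl <| by
    have hre := (abs_lt.mp ((abs_re_le_norm _).trans_lt (hs x hx))).1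
    simpa [neg_lt_iff_pos_add'] using hre

theorem hasContLogOn_const {c : ℂ} (hc : c ≠ 0) : HasContLogOn (fun _ : X => c) s :=
  ⟨fun _ => log c, continuousOn_const, fun _ _ => exp_log hc⟩

theorem HasContLogOn.comp {Y : Type*} [TopologicalSpace Y] {t : Set Y} {φ : Y → X}
    (h : HasContLogOn f s) (hφ : ContinuousOn φ t) (hst : MapsTo φ t s) :
    HasContLogOn (f ∘ φ) t := by
  obtain ⟨g, hg, hexp⟩ := h
  exact ⟨g ∘ φ, hg.comp hφ hst, fun y hy => hexp _ (hst hy)⟩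

theorem eqOn_of_exp_eqOn {g₁ g₂ : X → ℂ} (hs : IsPreconnected s) (h₁ : ContinuousOn g₁ s)
    (h₂ : ContinuousOn g₂ s) (hexp : EqOn (fun x => exp (g₁ x)) (fun x => exp (g₂ x)) s) {a : X}
    (ha : a ∈ s) (hga : g₁ a = g₂ a) : EqOn g₁ g₂ s :=
  isCoveringMap_exp.eqOn_of_comp_eqOn hs h₁ h₂ (fun _ hx => Subtype.ext (hexp hx)) ha hga

theorem HasContLogOn.of_subtype (h : HasContLogOn (fun x : s => f x) univ) : HasContLogOn f s := by
  obtain ⟨g, hg, hexp⟩ := h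
  have hextend (x : s) : Function.extend Subtype.val g 0 x.1 = g x :=
    Subtype.val_injective.extend_apply g 0 x
  refine ⟨Function.extend Subtype.val g 0, ?_, fun x hx => ?_⟩
  · rw [continuousOn_iff_continuous_domRestrict]
    exact (continuousOn_univ.mp hg).congr fun x => (hextend x).symm
  · rw [hextend ⟨x, hx⟩, hexp _ (mem_univ _)]

theorem hasContLogOn_homotopy_div {H : I × X → ℂ} (hcont : Continuous H) (hne : ∀ y, H y ≠ 0)
    (t₁ t₂ : I) : HasContLogOn (fun x => H (t₁, x) / H (t₂, x)) univ := by
  let Q : C(I × X, {z : ℂ // z ≠ 0}) :=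
    ⟨fun y => ⟨H y / H (0, y.2), div_ne_zero (hne _) (hne _)⟩,
      (hcont.div (by fun_prop) fun _ => hne _).subtype_mk _⟩
  have hQ (x : X) : Q (0, x) = ⟨exp 0, exp_ne_zero 0⟩ :=
    Subtype.ext <| by simp only [Q, ContinuousMap.coe_mk, div_self (hne _), exp_zero]
  let Λ := isCoveringMap_exp.liftHomotopy Q (ContinuousMap.const X 0) hQ
  have hlog (t : I) : HasContLogOn (fun x => H (t, x) / H (0, x)) univ :=
    ⟨fun x => Λ (t, x), by fun_prop, fun x _ => congrArg Subtype.val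
      (congrFun (isCoveringMap_exp.liftHomotopy_lifts Q (ContinuousMap.const X 0) hQ) (t, x))⟩
  exact ((hlog t₁).div (hlog t₂)).congr fun x _ => div_div_div_cancel_right₀ (hne _) _ _

end ContLog

section Torus

open Complex

variable {ι : Type*} [DecidableEq ι]

/-- The torus point obtained from `x` by turning the `i`-th coordinate through the angle `t`. -/
noncomputable def turn (x : ι → Circle) (i : ι) (t : ℝ) : ι → Circle :=
  x * Pi.mulSingle i (Circle.exp t)

theorem continuous_turn (x : ι → Circle) (i : ι) : Continuous (turn x i) :=
  continuous_const.mul ((continuous_mulSingle i).comp Circle.exp.continuous)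

theorem turn_zero (x : ι → Circle) (i : ι) : turn x i 0 = x := by
  simp [turn]

theorem turn_apply (x : ι → Circle) (i j : ι) (t : ℝ) :
    (turn x i t j : ℂ) = x j * exp (t • (Pi.single j Complex.I : ι → ℂ) i) := by
  obtain rfl | h := eq_or_ne i j
  · simp [turn]
  · simp [turn, h, h.symm]

theorem dist_turn_le [Fintype ι] (x : ι → Circle) (i : ι) (t : ℝ) : dist (turn x i t) x ≤ |t| := by
  refine (dist_pi_le_iff (abs_nonneg t)).mpr fun j => ?_
  have hnorm : dist (turn x i t j) (x j) = ‖exp (t • (Pi.single j Complex.I : ι → ℂ) i) - 1‖ :=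
    calc dist (turn x i t j) (x j)
        = dist (turn x i t j : ℂ) (x j) := rfl
      _ = ‖exp (t • (Pi.single j Complex.I : ι → ℂ) i) - 1‖ := by
        rw [dist_eq_norm_sub, turn_apply, ← mul_sub_one, norm_mul, Circle.norm_coe, one_mul]
  rw [hnorm]
  obtain rfl | h := eq_or_ne i j
  · simpa [mul_comm] using Real.norm_exp_I_mul_ofReal_sub_one_le (x := t)
  · simp [h]

theorem log_turn_sub {x : ι → Circle} {V : Set (ι → Circle)} {i j : ι} {g : (ι → Circle) → ℂ}
    (hg : ContinuousOn g V) (hexp : ∀ y ∈ V, exp (g y) = y j) {δ : ℝ} (hδ : 0 ≤ δ)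
    (hV : ∀ t ∈ Icc 0 δ, turn x i t ∈ V) :
    g (turn x i δ) - g x = δ • (Pi.single j Complex.I : ι → ℂ) i := by
  have hxV : x ∈ V := turn_zero x i ▸ hV 0 (left_mem_Icc.mpr hδ)
  have heq : EqOn (fun t => g (turn x i t))
      (fun t : ℝ => g x + t • (Pi.single j Complex.I : ι → ℂ) i) (Icc 0 δ) := by
    refine eqOn_of_exp_eqOn isPreconnected_Icc (hg.comp (continuous_turn x i).continuousOn hV)
      (by fun_prop) (fun t ht => ?_) (left_mem_Icc.mpr hδ) (by simp [turn_zero])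
    simp only [exp_add, hexp _ (hV t ht), hexp x hxV, turn_apply]
  exact sub_eq_of_eq_add' (heq (right_mem_Icc.mpr hδ))

/-- The finite subgroup of `N`-torsion points of the torus. -/
noncomputable def torsionPoint {N : ℕ} [NeZero N] (z : ι → ZMod N) : ι → Circle :=
  fun i => ZMod.toCircle (z i)

theorem torsionPoint_add_single {N : ℕ} [NeZero N] (z : ι → ZMod N) (i : ι) :
    torsionPoint (z + Pi.single i 1) = turn (torsionPoint z) i (2 * Real.pi / N) := by
  have hstep : ZMod.toCircle (1 : ZMod N) = Circle.exp (2 * Real.pi / N) := by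
    refine Circle.ext ?_
    rw [← Nat.cast_one, ZMod.toCircle_natCast, Circle.coe_exp]
    push_cast
    ring_nf
  ext1 j
  obtain rfl | h := eq_or_ne j i
  · simp [torsionPoint, turn, AddChar.map_add_eq_mul, hstep]
  · simp [torsionPoint, turn, h]

theorem periodCochain_neg_log_eq_zero {N : ℕ} [NeZero N] {z : ι → ZMod N} {V : Set (ι → Circle)}
    {j : ι} {g : (ι → Circle) → ℂ} (hg : ContinuousOn g V) (hexp : ∀ y ∈ V, exp (g y) = y j)
    (hV : ∀ i, ∀ t ∈ Icc 0 (2 * Real.pi / N), turn (torsionPoint z) i t ∈ V) :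
    periodCochain (fun i => Pi.single i 1) (Pi.single j ((2 * Real.pi / N) • Complex.I))
      (fun z => -g (torsionPoint z)) z = 0 := by
  ext i
  have hstep := log_turn_sub hg hexp (by positivity) (hV i)
  rw [← torsionPoint_add_single] at hstep
  simp only [periodCochain, Pi.single_smul, Pi.smul_apply, Pi.zero_apply, ← hstep]
  ring

end Torus

section CupLength

variable {ι : Type*}

theorem iUnion_ne_univ_of_hasContLogOn [Finite ι] {k : ℕ} {f : Fin k → ι}
    (hf : Function.Injective f) {V : Fin k → Set (ι → Circle)} (hopen : ∀ l, IsOpen (V l))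
    (hlog : ∀ l, HasContLogOn (fun x => (x (f l) : ℂ)) (V l)) : ⋃ l, V l ≠ univ := by
  classical
  cases nonempty_fintype ι
  intro hcover
  choose g hg hexp using hlog
  obtain ⟨ρ, hρ, hball⟩ := lebesgue_number_lemma_of_metric isCompact_univ hopen hcover.ge
  obtain ⟨N, hN⟩ := exists_nat_gt (k * (2 * Real.pi) / ρ)
  have hN0 : (0 : ℝ) < N := lt_of_le_of_lt (by positivity) hN
  have : NeZero N := ⟨fun h => by simp [h] at hN0⟩
  set δ : ℝ := 2 * Real.pi / N with hδ
  have hδ0 : 0 < δ := by positivity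
  have hkδ : k * δ < ρ := by
    rw [hδ, ← mul_div_assoc, div_lt_comm₀ hN0 hρ]
    exact hN
  let a (l : Fin k) : ι → ℂ := Pi.single (f l) (δ • Complex.I)
  have ha : LinearIndependent ℂ a :=
    (Pi.linearIndependent_single_of_ne_zero (v := fun _ : ι => δ • Complex.I)
      fun _ => smul_ne_zero hδ0.ne' Complex.I_ne_zero).comp f hf
  let b (i : ι) : ι → ZMod N := Pi.single i 1
  obtain ⟨z, hz⟩ := exists_cupProd_ne_zero b ha fun l z => -g l (torsionPoint z)
  obtain ⟨l, hl⟩ := hball (torsionPoint z) (mem_univ _)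
  refine hz (cupProd_eq_zero b (List.mem_finRange l)
    (s := fun n => {w | dist (torsionPoint w) (torsionPoint z) ≤ n * δ}) (fun n w hw i => ?_)
    (fun n hn w hw => periodCochain_neg_log_eq_zero (hg l) (hexp l) fun i t ht => hl ?_) (by simp))
  · have hturn := dist_turn_le (torsionPoint w) i δ
    rw [← torsionPoint_add_single, abs_of_pos hδ0] at hturn
    have htri := dist_triangle (torsionPoint (w + b i)) (torsionPoint w) (torsionPoint z)
    simp only [mem_ofPred_eq, Nat.cast_succ, add_one_mul] at hw ⊢
    linarith
  · have hnk : (n + 1 : ℝ) * δ ≤ k * δ := by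
      rw [List.length_finRange] at hn
      gcongr
      exact_mod_cast hn
    have hturn := dist_turn_le (torsionPoint w) i t
    rw [abs_of_nonneg ht.1] at hturn
    have htri := dist_triangle (turn (torsionPoint w) i t) (torsionPoint w) (torsionPoint z)
    rw [Metric.mem_ball]
    linarith [ht.2, hw.out]

theorem card_le_of_hasContLogOn [Fintype ι] {k : ℕ} {V : Fin (k + 1) → Set (ι → Circle)}
    (hopen : ∀ l, IsOpen (V l)) (hcover : ⋃ l, V l = univ)
    (hlog : ∀ l i, HasContLogOn (fun x => (x i : ℂ)) (V l)) : Fintype.card ι ≤ k := by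
  by_contra! hk
  obtain ⟨f⟩ : Nonempty (Fin (k + 1) ↪ ι) :=
    Function.Embedding.nonempty_of_card_le (by simpa using hk)
  exact iUnion_ne_univ_of_hasContLogOn f.injective hopen (fun l => hlog l (f l)) hcover

end CupLength

section Coord

variable {N r : ℕ}

/-- The identification of `ℂ` with the Euclidean plane. -/
noncomputable def toPlane : ℂ ≃ₗᵢ[ℝ] EuclideanSpace ℝ (Fin 2) :=
  Complex.orthonormalBasisOneI.repr

/-- The complex coordinate of the `k`-th point of a planar configuration. -/
noncomputable def coord (e : Conf 2 N) (k : Fin N) : ℂ :=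
  toPlane.symm (e.1 k)

/-- The planar configuration with prescribed complex coordinates. -/
noncomputable def ofCoord (z : Fin N → ℂ) (hz : Function.Injective z) : Conf 2 N :=
  ⟨fun k => toPlane (z k), toPlane.injective.comp hz⟩

@[simp]
theorem coord_ofCoord {z : Fin N → ℂ} (hz : Function.Injective z) (k : Fin N) :
    coord (ofCoord z hz) k = z k :=
  toPlane.symm_apply_apply _

@[fun_prop]
theorem continuous_coord (k : Fin N) : Continuous fun e : Conf 2 N => coord e k :=
  toPlane.symm.continuous.comp ((continuous_apply k).comp continuous_subtype_val)

theorem continuous_ofCoord {X : Type*} [TopologicalSpace X] {z : X → Fin N → ℂ}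
    (hz : ∀ x, Function.Injective (z x)) (hcont : ∀ k, Continuous fun x => z x k) :
    Continuous fun x => ofCoord (z x) (hz x) :=
  .subtype_mk (continuous_pi fun k => toPlane.continuous.comp (hcont k)) _

theorem coord_injective (e : Conf 2 N) : Function.Injective (coord e) :=
  toPlane.symm.injective.comp e.2

theorem conf_ext {e f : Conf 2 N} (h : ∀ k, coord e k = coord f k) : e = f :=
  Subtype.ext <| funext fun k => toPlane.symm.injective (h k)

theorem fnProj_eq_iff {m n : ℕ} {e f : Conf 2 (m + n)} : fnProj 2 m n e = fnProj 2 m n f ↔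
    ∀ i, coord e (Fin.castAdd n i) = coord f (Fin.castAdd n i) := by
  simp only [fnProj, Subtype.ext_iff, funext_iff, coord, toPlane.symm.injective.eq_iff]

theorem natAdd_ne_castAdd {m n : ℕ} (i : Fin m) (j : Fin n) : Fin.natAdd m j ≠ Fin.castAdd n i :=
  Fin.ne_of_val_ne (i.2.trans_le (Nat.le_add_right m j)).ne'

theorem HasLocalSection.hasContLogOn_coord_sub_div {B : Type*} [TopologicalSpace B]
    {p : Conf 2 N → B} {U : Set (ParamSpace p r)} (h : HasLocalSection (paramEval p r) U)
    (a b : Fin r) {k l : Fin N} (hkl : k ≠ l) :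
    HasContLogOn (fun e => (coord (e.1 a) k - coord (e.1 a) l) /
      (coord (e.1 b) k - coord (e.1 b) l)) U := by
  obtain ⟨s, hs⟩ := h
  let H (y : I × U) : ℂ := coord ((s y.2).1 y.1) k - coord ((s y.2).1 y.1) l
  have hcont : Continuous H := by fun_prop
  have hne (y) : H y ≠ 0 := sub_ne_zero.mpr ((coord_injective _).ne hkl)
  have heval (c : Fin r) (e : U) : (s e).1 (schedule r c) = e.1.1 c :=
    congrFun (congrArg Subtype.val (hs e)) c
  refine .of_subtype <| (hasContLogOn_homotopy_div hcont hne (schedule r a) (schedule r b)).congr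
    fun e _ => ?_
  simp only [H, heval]

end Coord

section LowerBound

variable {q n r : ℕ}

theorem injective_natCast_mul_circle {α : Type*} {c : α → ℕ} (hc : Function.Injective c)
    (x : α → Circle) : Function.Injective fun k => (c k : ℂ) * x k := fun k l h =>
  hc <| by simpa [Circle.norm_coe] using congrArg norm h

/-- The index set of the coordinates of the torus detecting the lower bound: one angle for each
moving point of each of the configurations, and one for each base point after the first two. -/
abbrev TorusIndex (q n r : ℕ) : Type :=
  (Fin r × Fin n) ⊕ Fin q

/-- The distance between the first two base points in the torus of configurations. -/
def torusDist (q n : ℕ) : ℕ :=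
  3 * (n + q + 2)

/-- The distances of the base points from the first one in the torus of configurations. -/
def torusRadius (q n : ℕ) : Fin (q + 2) → ℕ :=
  Fin.cons 0 (Fin.cons (torusDist q n) fun k => n + 1 + k)

/-- The base points of the torus of configurations: the first two are fixed, and each of the others
runs over a circle about the first one. -/
noncomputable def torusBase (x : TorusIndex q n r → Circle) (i : Fin (q + 2)) : ℂ :=
  (torusRadius q n i : ℂ) *
    (Fin.cons 1 (Fin.cons 1 fun k => x (.inr k)) : Fin (q + 2) → Circle) i

/-- The moving points of the `a`-th configuration of the torus: the `j`-th one runs over the circle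
of radius `j + 1` about the second base point if `a = 1`, and about the first one otherwise. -/
noncomputable def torusMoving (x : TorusIndex q n (r + 2) → Circle) (a : Fin (r + 2))
    (j : Fin n) : ℂ :=
  ((if a = 1 then torusDist q n else 0 : ℕ) : ℂ) + ((j + 1 : ℕ) : ℂ) * x (.inl (a, j))

theorem torusBase_zero (x : TorusIndex q n r → Circle) : torusBase x 0 = 0 := by
  simp [torusBase, torusRadius]

theorem torusBase_one (x : TorusIndex q n r → Circle) : torusBase x 1 = torusDist q n := by
  rw [← Fin.succ_zero_eq_one, torusBase]
  simp only [torusRadius, Fin.cons_succ, Fin.cons_zero, Circle.coe_one, mul_one]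

theorem torusBase_succ_succ (x : TorusIndex q n r → Circle) (k : Fin q) :
    torusBase x k.succ.succ = ((n + 1 + k : ℕ) : ℂ) * x (.inr k) := by
  simp [torusBase, torusRadius]

theorem torusBase_eq_or_lt_norm_sub (x : TorusIndex q n r → Circle) {c : ℕ}
    (hc : c = torusDist q n ∨ c = 0) (i : Fin (q + 2)) :
    torusBase x i = c ∨ n < ‖torusBase x i - c‖ := by
  have hn : (n : ℝ) < torusDist q n := by
    exact_mod_cast (by rw [torusDist]; omega : n < torusDist q n)
  refine Fin.cases ?_ (fun i => Fin.cases ?_ (fun k => ?_) i) i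
  · rw [torusBase_zero]
    obtain rfl | rfl := hc
    · right
      simpa using hn
    · simp
  · rw [Fin.succ_zero_eq_one, torusBase_one]
    obtain rfl | rfl := hc
    · simp
    · right
      simpa using hn
  · right
    have hnorm : ‖torusBase x k.succ.succ‖ = (n + 1 + k : ℕ) := by
      rw [torusBase_succ_succ, norm_mul, Complex.norm_natCast, Circle.norm_coe, mul_one]
    obtain rfl | rfl := hc
    · have htri := norm_sub_norm_le (torusDist q n : ℂ) (torusBase x k.succ.succ)
      rw [norm_sub_rev, hnorm, Complex.norm_natCast] at htri
      have hlt : (n : ℝ) + (n + 1 + k : ℕ) < torusDist q n := by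
        exact_mod_cast (by rw [torusDist]; omega : n + (n + 1 + k) < torusDist q n)
      linarith
    · rw [Nat.cast_zero, sub_zero, hnorm]
      exact_mod_cast (by omega : n < n + 1 + k)

theorem torusRadius_injective (q n : ℕ) : Function.Injective (torusRadius q n) := by
  simp only [torusRadius, torusDist, Fin.cons_injective_iff, Fin.range_cons, mem_insert_iff,
    mem_range, not_or, not_exists]
  exact ⟨⟨by omega, fun k => by omega⟩, fun k => by omega, fun k l h => Fin.ext (by simpa using h)⟩

theorem torusBase_injective (x : TorusIndex q n r → Circle) : Function.Injective (torusBase x) :=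
  injective_natCast_mul_circle (torusRadius_injective q n) _

theorem torusMoving_injective (x : TorusIndex q n (r + 2) → Circle) (a : Fin (r + 2)) :
    Function.Injective (torusMoving x a) :=
  (add_right_injective _).comp <| injective_natCast_mul_circle
    (fun _ _ h => Fin.ext (Nat.succ_injective h)) fun j => x (.inl (a, j))

theorem torusBase_ne_torusMoving (x : TorusIndex q n (r + 2) → Circle)
    (i : Fin (q + 2)) (a : Fin (r + 2)) (j : Fin n) : torusBase x i ≠ torusMoving x a j := by
  intro h
  have hnorm : ‖torusBase x i - (if a = 1 then torusDist q n else 0 : ℕ)‖ = j + 1 := by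
    rw [h, torusMoving, add_sub_cancel_left, norm_mul, Complex.norm_natCast, Circle.norm_coe,
      mul_one, Nat.cast_succ]
  have hj : (j : ℝ) + 1 ≤ n := by exact_mod_cast j.2
  have hj0 : (0 : ℝ) ≤ j := Nat.cast_nonneg _
  obtain heq | hlt := torusBase_eq_or_lt_norm_sub x (ite_eq_or_eq (a = 1) _ _) i
  · rw [heq, sub_self, norm_zero] at hnorm
    linarith
  · linarith

/-- The torus of configurations, as a family of points of the space `E^r_B`. -/
noncomputable def torusConf (x : TorusIndex q n (r + 2) → Circle) :
    ParamSpace (fnProj 2 (q + 2) n) (r + 2) :=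
  ⟨fun a => ofCoord (Fin.append (torusBase x) (torusMoving x a)) <|
    Fin.append_injective_iff.mpr
      ⟨torusBase_injective x, torusMoving_injective x a, (torusBase_ne_torusMoving x · a ·)⟩,
    fun a b => fnProj_eq_iff.mpr fun i => by simp only [coord_ofCoord, Fin.append_left]⟩

theorem coord_torusConf_castAdd (x : TorusIndex q n (r + 2) → Circle) (a : Fin (r + 2))
    (i : Fin (q + 2)) : coord ((torusConf x).1 a) (Fin.castAdd n i) = torusBase x i := by
  simp only [torusConf, coord_ofCoord, Fin.append_left]

theorem coord_torusConf_natAdd (x : TorusIndex q n (r + 2) → Circle) (a : Fin (r + 2))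
    (j : Fin n) : coord ((torusConf x).1 a) (Fin.natAdd (q + 2) j) = torusMoving x a j := by
  simp only [torusConf, coord_ofCoord, Fin.append_right]

theorem continuous_torusConf :
    Continuous (torusConf : (TorusIndex q n (r + 2) → Circle) → _) := by
  refine .subtype_mk (continuous_pi fun a => continuous_ofCoord _ fun k => ?_) _
  refine Fin.addCases (fun i => ?_) (fun j => ?_) k
  · simp only [Fin.append_left]
    refine continuous_const.mul (continuous_induced_dom.comp ?_)
    refine Fin.cases ?_ (fun i => Fin.cases ?_ (fun k => ?_) i) i
    · exact continuous_const
    · exact continuous_const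
    · exact continuous_apply _
  · simp only [Fin.append_right, torusMoving]
    fun_prop

theorem norm_natCast_mul_circle_lt {k l : ℕ} (h : k < l) (z : Circle) : ‖(k : ℂ) * z‖ < l := by
  simpa [Circle.norm_coe] using h

variable {U : Set (ParamSpace (fnProj 2 (q + 2) n) (r + 2))}

theorem hasContLogOn_torusMoving_sub_div
    (hU : HasLocalSection (paramEval (fnProj 2 (q + 2) n) (r + 2)) U) (a b : Fin (r + 2))
    (i : Fin (q + 2)) (j : Fin n) :
    HasContLogOn (fun x => (torusMoving x a j - torusBase x i) /
      (torusMoving x b j - torusBase x i)) (torusConf ⁻¹' U) := by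
  simpa only [Function.comp_def, coord_torusConf_castAdd, coord_torusConf_natAdd] using
    (hU.hasContLogOn_coord_sub_div a b (natAdd_ne_castAdd i j)).comp
      continuous_torusConf.continuousOn (mapsTo_preimage _ _)

theorem hasContLogOn_torusMoving_of_ne_one
    (hU : HasLocalSection (paramEval (fnProj 2 (q + 2) n) (r + 2)) U) {a : Fin (r + 2)}
    (ha : a ≠ 1) (j : Fin n) :
    HasContLogOn (fun x : TorusIndex q n (r + 2) → Circle => (x (.inl (a, j)) : ℂ))
      (torusConf ⁻¹' U) := by
  have hone : HasContLogOn (fun x => torusMoving x 1 j - torusBase x 0) (torusConf ⁻¹' U) := by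
    simp only [torusMoving, if_true, torusBase_zero, sub_zero]
    refine hasContLogOn_add_of_norm_lt (c := torusDist q n) (by fun_prop) fun x _ => ?_
    exact norm_natCast_mul_circle_lt (by rw [torusDist]; omega) _
  have hmul := (hasContLogOn_torusMoving_sub_div hU a 1 0 j).of_div hone
  simp only [torusMoving, if_neg ha, torusBase_zero, sub_zero, Nat.cast_zero, zero_add] at hmul
  exact hmul.of_mul_left (hasContLogOn_const (Nat.cast_ne_zero.mpr (Nat.succ_ne_zero _)))

theorem hasContLogOn_torusMoving_one
    (hU : HasLocalSection (paramEval (fnProj 2 (q + 2) n) (r + 2)) U) (j : Fin n) :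
    HasContLogOn (fun x : TorusIndex q n (r + 2) → Circle => (x (.inl (1, j)) : ℂ))
      (torusConf ⁻¹' U) := by
  have hzero : HasContLogOn (fun x => torusMoving x 0 j - torusBase x 1) (torusConf ⁻¹' U) := by
    have hneg : HasContLogOn (fun x : TorusIndex q n (r + 2) → Circle =>
        (torusDist q n : ℝ) + -(((j + 1 : ℕ) : ℂ) * x (.inl (0, j)))) (torusConf ⁻¹' U) := by
      refine hasContLogOn_add_of_norm_lt (by fun_prop) fun x _ => ?_
      rw [norm_neg]
      exact norm_natCast_mul_circle_lt (by rw [torusDist]; omega) _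
    refine ((hasContLogOn_const (neg_ne_zero.mpr one_ne_zero)).mul hneg).congr fun x _ => ?_
    simp only [torusMoving, zero_ne_one, if_false, torusBase_one, Nat.cast_zero,
      Complex.ofReal_natCast]
    ring
  have hmul := (hasContLogOn_torusMoving_sub_div hU 1 0 1 j).of_div hzero
  simp only [torusMoving, if_true, torusBase_one, add_sub_cancel_left] at hmul
  exact hmul.of_mul_left (hasContLogOn_const (Nat.cast_ne_zero.mpr (Nat.succ_ne_zero _)))

theorem hasContLogOn_torusBase [NeZero n]
    (hU : HasLocalSection (paramEval (fnProj 2 (q + 2) n) (r + 2)) U) (k : Fin q) :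
    HasContLogOn (fun x : TorusIndex q n (r + 2) → Circle => (x (.inr k) : ℂ))
      (torusConf ⁻¹' U) := by
  have hone : HasContLogOn (fun x => torusMoving x 1 0 - torusBase x k.succ.succ)
      (torusConf ⁻¹' U) := by
    simp only [torusMoving, if_true, torusBase_succ_succ, add_sub_assoc]
    refine hasContLogOn_add_of_norm_lt (c := torusDist q n) (by fun_prop) fun x _ => ?_
    refine (norm_sub_le _ _).trans_lt ((add_lt_add (norm_natCast_mul_circle_lt
      (Nat.lt_succ_self _) _) (norm_natCast_mul_circle_lt (Nat.lt_succ_self _) _)).trans_le ?_)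
    exact_mod_cast (by rw [torusDist]; simp; omega)
  have hzero := (hasContLogOn_torusMoving_sub_div hU 0 1 k.succ.succ 0).of_div hone
  have hquot : HasContLogOn (fun x : TorusIndex q n (r + 2) → Circle =>
      -1 * (((n + 1 + k : ℕ) : ℝ) + -((x (.inl (0, 0)) / x (.inr k) : Circle) : ℂ)))
      (torusConf ⁻¹' U) := by
    refine (hasContLogOn_const (neg_ne_zero.mpr one_ne_zero)).mul <|
      hasContLogOn_add_of_norm_lt (Continuous.continuousOn ?_) fun x _ => ?_
    · exact (continuous_induced_dom.comp (by fun_prop)).neg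
    rw [norm_neg, Circle.norm_coe]
    exact_mod_cast (by have := NeZero.pos n; omega : 1 < n + 1 + k)
  refine (hzero.congr fun x _ => ?_).of_mul_left hquot
  simp only [torusMoving, zero_ne_one, if_false, torusBase_succ_succ, Circle.coe_div,
    Fin.coe_ofNat_eq_mod, Nat.zero_mod]
  have hx : (x (.inr k) : ℂ) ≠ 0 := Circle.coe_ne_zero _
  push_cast
  field_simp
  ring

theorem le_of_hasSecatLE_paramEval [NeZero n] {k : ℕ}
    (h : HasSecatLE (paramEval (fnProj 2 (q + 2) n) (r + 2)) k) : (r + 2) * n + q ≤ k := by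
  obtain ⟨U, hopen, hcover, hsec⟩ := h
  have hcard := card_le_of_hasContLogOn (V := fun l => torusConf ⁻¹' U l)
    (fun l => (hopen l).preimage continuous_torusConf)
    (by rw [← preimage_iUnion, hcover, preimage_univ]) ?_
  · simpa using hcard
  · rintro l (⟨a, j⟩ | i)
    · obtain rfl | ha := eq_or_ne a 1
      · exact hasContLogOn_torusMoving_one (hsec l) j
      · exact hasContLogOn_torusMoving_of_ne_one (hsec l) ha j
    · exact hasContLogOn_torusBase (hsec l) i

end LowerBound

section Clustering

variable {P : Type*} {S S' : Setoid P} {ξ : P → ℝ} {p q : P}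

/-- The setoid `S` groups the points `ξ p` of the real line into clusters: any two points of the
same cluster are closer to each other than any two points of different clusters. -/
def IsClustering (S : Setoid P) (ξ : P → ℝ) : Prop :=
  ∀ ⦃p q p' q'⦄, S p q → ¬S p' q' → |ξ p - ξ q| < |ξ p' - ξ q'|

theorem isClustering_ker (ξ : P → ℝ) : IsClustering (Setoid.ker ξ) ξ := fun p q p' q' h h' => by
  rw [Setoid.ker_def] at h h'
  rwa [h, sub_self, abs_zero, abs_pos, sub_ne_zero]

theorem IsClustering.le_or_ge (h : IsClustering S ξ) (h' : IsClustering S' ξ) :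
    S ≤ S' ∨ S' ≤ S := by
  by_contra! hle
  simp only [Setoid.le_def, not_forall] at hle
  obtain ⟨⟨p, q, hS, hS'⟩, p', q', hS₂', hS₂⟩ := hle
  exact (h hS hS₂).not_gt (h' hS₂' hS')

theorem eq_of_le_of_card_quotient_eq [Finite P] (hle : S ≤ S')
    (hcard : Nat.card (Quotient S) = Nat.card (Quotient S')) : S = S' := by
  let f : Quotient S → Quotient S' := Quotient.map id fun _ _ h => hle h
  have hf : Function.Surjective f := fun y => by
    obtain ⟨p, rfl⟩ := Quotient.mk_surjective y
    exact ⟨Quotient.mk S p, rfl⟩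
  have hinj := (hf.bijective_of_nat_card_le hcard.le).injective
  refine hle.antisymm fun p q hpq => ?_
  exact Quotient.exact (hinj (Quotient.sound hpq : f (Quotient.mk S p) = f (Quotient.mk S q)))

theorem IsClustering.eq_of_card_quotient_eq [Finite P] (h : IsClustering S ξ)
    (h' : IsClustering S' ξ) (hcard : Nat.card (Quotient S) = Nat.card (Quotient S')) : S = S' :=
  (h.le_or_ge h').elim (eq_of_le_of_card_quotient_eq · hcard)
    fun hle => (eq_of_le_of_card_quotient_eq hle hcard.symm).symm

variable [Fintype P]

open Classical in
/-- The least distance between points in different clusters, truncated at `1` so that it makes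
sense for a single cluster. -/
noncomputable def clusterGap [Nonempty P] (S : Setoid P) (ξ : P → ℝ) : ℝ :=
  Finset.univ.inf' Finset.univ_nonempty fun pq : P × P =>
    if S pq.1 pq.2 then 1 else |ξ pq.1 - ξ pq.2|

open Classical in
/-- The rightmost point of the cluster of `ξ p`. -/
noncomputable def clusterMax (S : Setoid P) (ξ : P → ℝ) (p : P) : ℝ :=
  Finset.sup' {q | S p q} ⟨p, (Finset.mem_filter_univ p).mpr (S.refl p)⟩ ξ

theorem le_clusterMax (h : S p q) : ξ q ≤ clusterMax S ξ p :=
  Finset.le_sup' ξ (by simpa using h)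

theorem exists_clusterMax_eq (S : Setoid P) (ξ : P → ℝ) (p : P) :
    ∃ q, S p q ∧ clusterMax S ξ p = ξ q := by
  obtain ⟨q, hq, h⟩ : ∃ q ∈ _, clusterMax S ξ p = ξ q := Finset.exists_mem_eq_sup' _ ξ
  exact ⟨q, by simpa using hq, h⟩

theorem clusterMax_congr (h : S p q) : clusterMax S ξ p = clusterMax S ξ q := by
  have hle {p q : P} (h : S p q) : clusterMax S ξ q ≤ clusterMax S ξ p := by
    obtain ⟨q', hq', hmax⟩ := exists_clusterMax_eq S ξ q
    exact hmax ▸ le_clusterMax (S.trans h hq')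
  exact (hle (S.symm h)).antisymm (hle h)

theorem continuous_clusterMax {Y : Type*} [TopologicalSpace Y] {ξ : Y → P → ℝ}
    (hξ : ∀ p, Continuous fun y => ξ y p) (S : Setoid P) (p : P) :
    Continuous fun y => clusterMax S (ξ y) p :=
  Continuous.finset_sup'_apply _ fun q _ => hξ q

variable [Nonempty P]

theorem continuous_clusterGap {Y : Type*} [TopologicalSpace Y] {ξ : Y → P → ℝ}
    (hξ : ∀ p, Continuous fun y => ξ y p) (S : Setoid P) :
    Continuous fun y => clusterGap S (ξ y) := by
  refine Continuous.finset_inf'_apply _ fun pq _ => ?_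
  split_ifs
  · exact continuous_const
  · exact ((hξ _).sub (hξ _)).abs

theorem IsClustering.clusterGap_pos (h : IsClustering S ξ) : 0 < clusterGap S ξ := by
  refine (Finset.lt_inf'_iff _).mpr fun pq _ => ?_
  split_ifs with hS
  · exact one_pos
  · simpa using h (S.refl pq.1) hS

theorem clusterGap_le (hpq : ¬S p q) : clusterGap S ξ ≤ |ξ p - ξ q| :=
  (Finset.inf'_le _ (Finset.mem_univ (p, q))).trans_eq (if_neg hpq)

/-- The part of the real line available to a point moving to the right from `ξ p`. -/
def clusterWindow (S : Setoid P) (ξ : P → ℝ) (p : P) : Set ℝ :=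
  Ico (ξ p) (clusterMax S ξ p + clusterGap S ξ)

theorem IsClustering.clusterMax_add_clusterGap_le (h : IsClustering S ξ) (hpq : ¬S p q)
    (hle : clusterMax S ξ p ≤ clusterMax S ξ q) : clusterMax S ξ p + clusterGap S ξ ≤ ξ q := by
  obtain ⟨p₁, hp, hpmax⟩ := exists_clusterMax_eq S ξ p
  obtain ⟨q₁, hq, hqmax⟩ := exists_clusterMax_eq S ξ q
  rw [hpmax, hqmax] at hle
  have hpq₁ : ¬S p₁ q := fun hS => hpq (S.trans hp hS)
  have hspread := h hq fun hS => hpq₁ (S.trans hS (S.symm hq))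
  have hlt : ξ p₁ < ξ q := by
    rw [abs_sub_comm, abs_sub_comm (ξ p₁), abs_of_nonneg (sub_nonneg.mpr hle)] at hspread
    linarith [le_abs_self (ξ q₁ - ξ q)]
  have hgap := clusterGap_le (ξ := ξ) hpq₁
  rw [abs_sub_comm, abs_of_pos (sub_pos.mpr hlt)] at hgap
  linarith

theorem IsClustering.disjoint_clusterWindow (h : IsClustering S ξ) (hpq : ¬S p q) :
    Disjoint (clusterWindow S ξ p) (clusterWindow S ξ q) := by
  refine disjoint_left.mpr fun x hp hq => ?_
  obtain hle | hle := le_total (clusterMax S ξ p) (clusterMax S ξ q)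
  · exact (hp.2.trans_le (h.clusterMax_add_clusterGap_le hpq hle)).not_ge hq.1
  · have hqp : ¬S q p := fun hS => hpq (S.symm hS)
    exact (hq.2.trans_le (h.clusterMax_add_clusterGap_le hqp hle)).not_ge hp.1

theorem IsClustering.self_mem_clusterWindow (h : IsClustering S ξ) (p : P) :
    ξ p ∈ clusterWindow S ξ p :=
  ⟨le_rfl, (le_clusterMax (S.refl p)).trans_lt (lt_add_of_pos_right _ h.clusterGap_pos)⟩

/-- The point dividing in the ratio `t : 1 - t` the free interval to the right of the cluster of
`ξ p`. -/
noncomputable def clusterTarget (S : Setoid P) (ξ : P → ℝ) (p : P) (t : ℝ) : ℝ :=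
  clusterMax S ξ p + clusterGap S ξ * t

theorem IsClustering.lt_clusterTarget (h : IsClustering S ξ) (hpq : S p q) {t : ℝ} (ht : 0 < t) :
    ξ q < clusterTarget S ξ p t :=
  (le_clusterMax hpq).trans_lt (lt_add_of_pos_right _ (mul_pos h.clusterGap_pos ht))

theorem IsClustering.uIcc_clusterTarget_subset (h : IsClustering S ξ) (p : P) {t : ℝ}
    (ht : t ∈ Ioo 0 1) : uIcc (ξ p) (clusterTarget S ξ p t) ⊆ clusterWindow S ξ p :=
  ordConnected_Ico.uIcc_subset (h.self_mem_clusterWindow p)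
    ⟨(h.lt_clusterTarget (S.refl p) ht.1).le,
      add_lt_add_right (mul_lt_of_lt_one_right h.clusterGap_pos ht.2) _⟩

theorem IsClustering.clusterTarget_eq_iff (h : IsClustering S ξ) (hpq : S p q) {t t' : ℝ} :
    clusterTarget S ξ p t = clusterTarget S ξ q t' ↔ t = t' := by
  rw [clusterTarget, clusterTarget, clusterMax_congr hpq, add_right_inj,
    mul_right_inj' h.clusterGap_pos.ne']

end Clustering

section DodgePath

/-- The progress, at time `s`, of the `k`-th of three consecutive motions of equal duration. -/
noncomputable def stage (k : ℕ) (s : I) : ℝ :=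
  projIcc (0 : ℝ) 1 zero_le_one (3 * s - k)

@[fun_prop]
theorem continuous_stage (k : ℕ) : Continuous (stage k) := by
  unfold stage
  fun_prop

theorem stage_zero (k : ℕ) : stage k 0 = 0 := by
  rw [stage, projIcc_of_le_left _ (by simp)]

theorem stage_one {k : ℕ} (hk : k ≤ 2) : stage k 1 = 1 := by
  have hk' : (k : ℝ) ≤ 2 := mod_cast hk
  rw [stage, projIcc_of_right_le _ (by rw [Icc.coe_one]; linarith)]

theorem stage_cases (s : I) : stage 1 s = 0 ∧ stage 2 s = 0 ∨ stage 0 s = 1 ∧ stage 2 s = 0 ∨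
    stage 1 s = 1 := by
  have hzero {k : ℕ} (h : (3 : ℝ) * s ≤ k) : stage k s = 0 := by
    rw [stage, projIcc_of_le_left _ (by linarith)]
  have hone {k : ℕ} (h : (k : ℝ) + 1 ≤ 3 * s) : stage k s = 1 := by
    rw [stage, projIcc_of_right_le _ (by linarith)]
  obtain h₁ | h₁ := le_total ((3 : ℝ) * s) 1
  · exact .inl ⟨hzero (by simpa using h₁), hzero (by push_cast; linarith)⟩
  obtain h₂ | h₂ := le_total ((3 : ℝ) * s) 2
  · exact .inr (.inl ⟨hone (by simpa using h₁), hzero (by simpa using h₂)⟩)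
  · exact .inr (.inr (hone (by push_cast; linarith)))

/-- The path which moves from `w` horizontally to abscissa `x`, then vertically to ordinate `y`, and
then horizontally to the imaginary axis. -/
noncomputable def dodgePath (w : ℂ) (x y : ℝ) (s : I) : ℂ :=
  ⟨(1 - stage 2 s) * AffineMap.lineMap w.re x (stage 0 s), AffineMap.lineMap w.im y (stage 1 s)⟩

theorem dodgePath_zero (w : ℂ) (x y : ℝ) : dodgePath w x y 0 = w := by
  simp [dodgePath, stage_zero]

theorem dodgePath_one (w : ℂ) (x y : ℝ) : dodgePath w x y 1 = ⟨0, y⟩ := by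
  simp [dodgePath, stage_one]

theorem continuous_dodgePath {Y : Type*} [TopologicalSpace Y] {w : Y → ℂ} {x y : Y → ℝ} {s : Y → I}
    (hw : Continuous w) (hx : Continuous x) (hy : Continuous y) (hs : Continuous s) :
    Continuous fun z => dodgePath (w z) (x z) (y z) (s z) := by
  unfold dodgePath
  refine Complex.equivRealProdCLM.symm.continuous.comp (.prodMk ?_ ?_)
  · simp only [AffineMap.lineMap_apply_ring']
    fun_prop
  · simp only [AffineMap.lineMap_apply_ring']
    fun_prop

theorem lineMap_stage_mem_uIcc (a b : ℝ) (k : ℕ) (s : I) :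
    AffineMap.lineMap a b (stage k s) ∈ uIcc a b :=
  (convex_uIcc a b).lineMap_mem left_mem_uIcc right_mem_uIcc (projIcc _ _ _ _).2

theorem dodgePath_ne {w z : ℂ} {x y : ℝ} (h : w.im = z.im → z.re ∉ uIcc w.re x) (hx : x ≠ z.re)
    (hy : y ≠ z.im) (s : I) : dodgePath w x y s ≠ z := by
  intro heq
  obtain ⟨hre, him⟩ := Complex.ext_iff.mp heq
  simp only [dodgePath] at hre him
  obtain ⟨h₁, h₂⟩ | ⟨h₀, h₂⟩ | h₁ := stage_cases s
  · rw [h₂, sub_zero, one_mul] at hre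
    rw [h₁, AffineMap.lineMap_apply_zero] at him
    exact h him (hre ▸ lineMap_stage_mem_uIcc _ _ _ s)
  · rw [h₀, h₂, sub_zero, one_mul, AffineMap.lineMap_apply_one] at hre
    exact hx hre
  · rw [h₁, AffineMap.lineMap_apply_one] at him
    exact hy him

theorem dodgePath_ne_dodgePath {w w' : ℂ} {x x' y y' : ℝ}
    (h : w.im = w'.im → Disjoint (uIcc w.re x) (uIcc w'.re x')) (hx : x ≠ x') (hy : y ≠ y')
    (s : I) : dodgePath w x y s ≠ dodgePath w' x' y' s := by
  intro heq
  obtain ⟨hre, him⟩ := Complex.ext_iff.mp heq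
  simp only [dodgePath] at hre him
  obtain ⟨h₁, h₂⟩ | ⟨h₀, h₂⟩ | h₁ := stage_cases s
  · rw [h₂, sub_zero, one_mul, one_mul] at hre
    rw [h₁, AffineMap.lineMap_apply_zero, AffineMap.lineMap_apply_zero] at him
    exact (h him).ne_of_mem (lineMap_stage_mem_uIcc _ _ _ s) (lineMap_stage_mem_uIcc _ _ _ s) hre
  · rw [h₀, h₂, sub_zero, one_mul, one_mul, AffineMap.lineMap_apply_one,
      AffineMap.lineMap_apply_one] at hre
    exact hx hre
  · rw [h₁, AffineMap.lineMap_apply_one, AffineMap.lineMap_apply_one] at him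
    exact hy him

end DodgePath

section ClusterMotion

variable {P : Type*} [Fintype P] [Nonempty P] {S : Setoid P} {z : P → ℂ} {p q : P}

theorem IsClustering.clusterTarget_ne (h : IsClustering S fun p => (z p).re) {t : ℝ}
    (ht : t ∈ Ioo 0 1) : clusterTarget S (fun p => (z p).re) p t ≠ (z q).re := by
  by_cases hpq : S p q
  · exact (h.lt_clusterTarget hpq ht.1).ne'
  · exact (h.disjoint_clusterWindow hpq).ne_of_mem
      (h.uIcc_clusterTarget_subset p ht right_mem_uIcc) (h.self_mem_clusterWindow q)

theorem IsClustering.dodgePath_ne (h : IsClustering S fun p => (z p).re) {t y : ℝ}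
    (hpq : S p q → (z p).im ≠ (z q).im) (ht : t ∈ Ioo 0 1) (hy : y ≠ (z q).im) (s : I) :
    dodgePath (z p) (clusterTarget S (fun p => (z p).re) p t) y s ≠ z q := by
  refine FadellNeuwirth.dodgePath_ne (fun him hq => ?_) (h.clusterTarget_ne ht) hy s
  exact (h.disjoint_clusterWindow fun hS => hpq hS him).ne_of_mem
    (h.uIcc_clusterTarget_subset p ht hq) (h.self_mem_clusterWindow q) rfl

theorem IsClustering.dodgePath_ne_dodgePath (h : IsClustering S fun p => (z p).re)
    {t t' y y' : ℝ} (hpq : S p q → (z p).im ≠ (z q).im) (ht : t ∈ Ioo 0 1) (ht' : t' ∈ Ioo 0 1)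
    (htt' : t ≠ t') (hy : y ≠ y') (s : I) :
    dodgePath (z p) (clusterTarget S (fun p => (z p).re) p t) y s ≠
      dodgePath (z q) (clusterTarget S (fun p => (z p).re) q t') y' s := by
  have hdisj (hS : ¬S p q) := (h.disjoint_clusterWindow hS).mono
    (h.uIcc_clusterTarget_subset p ht) (h.uIcc_clusterTarget_subset q ht')
  refine FadellNeuwirth.dodgePath_ne_dodgePath (fun him => hdisj fun hS => hpq hS him) ?_ hy s
  by_cases hS : S p q
  · exact (h.clusterTarget_eq_iff hS).not.mpr htt'
  · exact (hdisj hS).ne_of_mem right_mem_uIcc right_mem_uIcc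

end ClusterMotion

section Motion

variable {m n r : ℕ}

/-- The index set of the points of an element of `E^r_B`: the `m` points of the common image in the
base `F(ℝ², m)`, and the `n` moving points of each of the `r` configurations. -/
abbrev PointIndex (m n r : ℕ) : Type :=
  Fin m ⊕ Fin r × Fin n

/-- The index of the `k`-th point of the `a`-th configuration. -/
def pointLabel (m : ℕ) (a : Fin r) : Fin (m + n) → PointIndex m n r :=
  Fin.append Sum.inl fun j => Sum.inr (a, j)

/-- The abscissae of the targets of the moving points, relative to the free interval to the right
of a cluster. -/
noncomputable def slot (j : Fin n) : ℝ :=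
  (j + 1) / (n + 1)

theorem slot_mem_Ioo (j : Fin n) : slot j ∈ Ioo 0 1 := by
  have hj : (j : ℝ) < n := mod_cast j.2
  exact ⟨by unfold slot; positivity, (div_lt_one (by positivity)).mpr (by linarith)⟩

theorem slot_injective : Function.Injective (slot (n := n)) := fun j k h => by
  rw [slot, slot, div_left_inj' (by positivity), add_left_inj] at h
  exact Fin.ext (mod_cast h)

variable {z : PointIndex m n r → ℂ} {S : Setoid (PointIndex m n r)}

/-- The ordinates of the targets of the moving points, above all the points `z p`. -/
noncomputable def height (z : PointIndex m n r → ℂ) (j : Fin n) : ℝ :=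
  1 + ∑ p, |(z p).im| + j

theorem im_lt_height (z : PointIndex m n r → ℂ) (p : PointIndex m n r) (j : Fin n) :
    (z p).im < height z j := by
  have hsum : |(z p).im| ≤ ∑ p, |(z p).im| :=
    Finset.single_le_sum (f := fun p => |(z p).im|) (fun _ _ => abs_nonneg _) (Finset.mem_univ p)
  rw [height]
  linarith [le_abs_self (z p).im, Nat.cast_nonneg (α := ℝ) (j : ℕ)]

theorem height_injective (z : PointIndex m n r → ℂ) : Function.Injective (height z) :=
  fun j k h => by
  rw [height, height, add_right_inj] at h
  exact Fin.ext (mod_cast h)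

/-- The points are distinct within each of the `r` configurations, as witnessed by the clusters `S`
of their real parts and, within a cluster, by their imaginary parts. -/
def IsStratified (S : Setoid (PointIndex m n r)) (z : PointIndex m n r → ℂ) : Prop :=
  IsClustering S (fun p => (z p).re) ∧ ∀ a k l, k ≠ l →
    S (pointLabel m a k) (pointLabel m a l) →
      (z (pointLabel m a k)).im ≠ (z (pointLabel m a l)).im

theorem isStratified_ker (hz : ∀ a, Function.Injective (z ∘ pointLabel m a)) :
    IsStratified (Setoid.ker fun p => (z p).re) z :=
  ⟨isClustering_ker _, fun a _ _ hkl hre him => hkl (hz a (Complex.ext hre him))⟩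

theorem isOpen_setOf_isStratified {Y : Type*} [TopologicalSpace Y] {z : Y → PointIndex m n r → ℂ}
    (hz : ∀ p, Continuous fun y => z y p) (S : Setoid (PointIndex m n r)) :
    IsOpen {y | IsStratified S (z y)} := by
  simp only [IsStratified, IsClustering, ofPred_and, ofPred_forall]
  refine .inter ?_ ?_
  · repeat refine isOpen_iInter_of_finite fun _ => ?_
    exact isOpen_lt (by fun_prop) (by fun_prop)
  · repeat refine isOpen_iInter_of_finite fun _ => ?_
    exact isOpen_ne_fun (by fun_prop) (by fun_prop)

variable [NeZero m]

/-- The motion of the `a`-th configuration which keeps the base points fixed and brings the moving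
points to positions on the imaginary axis which do not depend on `a`. -/
noncomputable def motion (S : Setoid (PointIndex m n r)) (z : PointIndex m n r → ℂ) (a : Fin r)
    (s : I) : Fin (m + n) → ℂ :=
  Fin.append (fun i => z (Sum.inl i)) fun j => dodgePath (z (Sum.inr (a, j)))
    (clusterTarget S (fun p => (z p).re) (Sum.inr (a, j)) (slot j)) (height z j) s

theorem motion_zero (a : Fin r) : motion S z a 0 = z ∘ pointLabel m a := by
  ext k
  cases k using Fin.addCases <;> simp [motion, pointLabel, dodgePath_zero]

theorem motion_one_eq (a b : Fin r) : motion S z a 1 = motion S z b 1 := by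
  simp only [motion, dodgePath_one]

theorem motion_castAdd (a : Fin r) (s : I) (i : Fin m) :
    motion S z a s (Fin.castAdd n i) = z (Sum.inl i) :=
  Fin.append_left _ _ i

theorem continuous_motion {Y : Type*} [TopologicalSpace Y] {z : Y → PointIndex m n r → ℂ}
    (hz : ∀ p, Continuous fun y => z y p) (S : Setoid (PointIndex m n r)) (a : Fin r)
    (k : Fin (m + n)) : Continuous fun y : Y × I => motion S (z y.1) a y.2 k := by
  cases k using Fin.addCases with
  | left i =>
    simp only [motion_castAdd]
    fun_prop
  | right j =>
    have hre (p) : Continuous fun y => (z y p).re := by fun_prop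
    have hheight : Continuous fun y => height (z y) j := by
      unfold height
      fun_prop
    have htarget : Continuous fun y => clusterTarget S (fun p => (z y p).re) (Sum.inr (a, j))
        (slot j) :=
      (continuous_clusterMax hre S _).add ((continuous_clusterGap hre S).mul continuous_const)
    simp only [motion, Fin.append_right]
    exact continuous_dodgePath (by fun_prop) (htarget.comp continuous_fst)
      (hheight.comp continuous_fst) continuous_snd

theorem IsStratified.motion_injective {a : Fin r} (h : IsStratified S z)
    (hz : Function.Injective (z ∘ pointLabel m a)) (s : I) :
    Function.Injective (motion S z a s) := by
  have him {k l} (hkl : k ≠ l) := h.2 a k l hkl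
  refine Fin.append_injective_iff.mpr ⟨fun i i' hi => ?_, fun j j' hj => ?_, fun i j hij => ?_⟩
  · exact Fin.castAdd_injective m n (hz (by simpa [pointLabel] using hi))
  · by_contra hne
    have hlabel := him ((Fin.natAdd_injective n m).ne hne)
    simp only [pointLabel, Fin.append_right] at hlabel
    exact h.1.dodgePath_ne_dodgePath hlabel (slot_mem_Ioo j) (slot_mem_Ioo j')
      (slot_injective.ne hne) ((height_injective z).ne hne) s hj
  · have hlabel := him (natAdd_ne_castAdd i j)
    simp only [pointLabel, Fin.append_left, Fin.append_right] at hlabel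
    exact h.1.dodgePath_ne hlabel (slot_mem_Ioo j) (im_lt_height z _ j).ne' s hij.symm

end Motion

section UpperBound

variable {m q n r : ℕ} [NeZero r]

/-- The points of an element of `E^r_B`. -/
noncomputable def point (e : ParamSpace (fnProj 2 m n) r) : PointIndex m n r → ℂ :=
  Sum.elim (fun i => coord (e.1 0) (Fin.castAdd n i)) fun aj => coord (e.1 aj.1) (Fin.natAdd m aj.2)

theorem point_comp_pointLabel (e : ParamSpace (fnProj 2 m n) r) (a : Fin r) :
    point e ∘ pointLabel m a = coord (e.1 a) := by
  ext k
  cases k using Fin.addCases with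
  | left i => simpa [point, pointLabel] using fnProj_eq_iff.mp (e.2 0 a) i
  | right j => simp [point, pointLabel]

theorem continuous_point (p : PointIndex m n r) :
    Continuous fun e : ParamSpace (fnProj 2 m n) r => point e p := by
  have hcoord (a : Fin r) (k : Fin (m + n)) :
      Continuous fun e : ParamSpace (fnProj 2 m n) r => coord (e.1 a) k :=
    (continuous_coord k).comp ((continuous_apply a).comp continuous_subtype_val)
  rcases p with i | ⟨a, j⟩
  · exact hcoord 0 _
  · exact hcoord a _

theorem point_inl_injective (e : ParamSpace (fnProj 2 m n) r) :
    Function.Injective fun i => point e (Sum.inl i) :=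
  (coord_injective (e.1 0)).comp (Fin.castAdd_injective m n)

/-- The points of an element of `E^r_B` in the affine coordinate on the plane in which the first two
base points are `0` and `1`; for one configuration this is the first factor of the splitting
`h_s`. -/
noncomputable def normPoint (e : ParamSpace (fnProj 2 (q + 2) n) r)
    (p : PointIndex (q + 2) n r) : ℂ :=
  (point e p - point e (Sum.inl 0)) / (point e (Sum.inl 1) - point e (Sum.inl 0))

theorem point_inl_one_sub_ne_zero (e : ParamSpace (fnProj 2 (q + 2) n) r) :
    point e (Sum.inl 1) - point e (Sum.inl 0) ≠ 0 :=
  sub_ne_zero.mpr ((point_inl_injective e).ne Fin.zero_ne_one.symm)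

theorem lineMap_normPoint (e : ParamSpace (fnProj 2 (q + 2) n) r) (p : PointIndex (q + 2) n r) :
    AffineMap.lineMap (point e (Sum.inl 0)) (point e (Sum.inl 1)) (normPoint e p) = point e p := by
  rw [AffineMap.lineMap_apply_ring', normPoint, div_mul_cancel₀ _ (point_inl_one_sub_ne_zero e),
    sub_add_cancel]

theorem continuous_normPoint (p : PointIndex (q + 2) n r) :
    Continuous fun e : ParamSpace (fnProj 2 (q + 2) n) r => normPoint e p :=
  ((continuous_point p).sub (continuous_point _)).div
    ((continuous_point _).sub (continuous_point _)) point_inl_one_sub_ne_zero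

theorem normPoint_comp_pointLabel_injective (e : ParamSpace (fnProj 2 (q + 2) n) r) (a : Fin r) :
    Function.Injective (normPoint e ∘ pointLabel (q + 2) a) := by
  refine .of_comp (f := AffineMap.lineMap (point e (Sum.inl 0)) (point e (Sum.inl 1))) ?_
  have hcomp : AffineMap.lineMap (point e (Sum.inl 0)) (point e (Sum.inl 1)) ∘
      normPoint e ∘ pointLabel (q + 2) a = coord (e.1 a) := by
    rw [← point_comp_pointLabel]
    exact funext fun k => lineMap_normPoint e _
  exact hcomp ▸ coord_injective (e.1 a)

theorem two_le_card_quotient_ker_re_normPoint (e : ParamSpace (fnProj 2 (q + 2) n) r) :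
    2 ≤ Nat.card (Quotient (Setoid.ker fun p => (normPoint e p).re)) := by
  have hne : (normPoint e (Sum.inl 0)).re ≠ (normPoint e (Sum.inl 1)).re := by
    simp [normPoint, div_self (point_inl_one_sub_ne_zero e)]
  have : Nontrivial (Quotient (Setoid.ker fun p => (normPoint e p).re)) :=
    ⟨⟦Sum.inl 0⟧, ⟦Sum.inl 1⟧, fun h => hne (Quotient.exact h)⟩
  exact Finite.one_lt_card

theorem hasLocalSection_isStratified (S : Setoid (PointIndex (q + 2) n r)) :
    HasLocalSection (paramEval (fnProj 2 (q + 2) n) r) {e | IsStratified S (normPoint e)} := by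
  let U : Set (ParamSpace (fnProj 2 (q + 2) n) r) := {e | IsStratified S (normPoint e)}
  let Z (a : Fin r) (y : U × I) (k : Fin (q + 2 + n)) : ℂ :=
    AffineMap.lineMap (point y.1.1 (Sum.inl 0)) (point y.1.1 (Sum.inl 1))
      (motion S (normPoint y.1.1) a y.2 k)
  have hZ (a y) : Function.Injective (Z a y) :=
    (AffineMap.lineMap_injective ℂ (sub_ne_zero.mp (point_inl_one_sub_ne_zero y.1.1)).symm).comp
      (y.1.2.motion_injective (normPoint_comp_pointLabel_injective y.1.1 a) y.2)
  have hcont (a k) : Continuous fun y => Z a y k := by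
    have hmotion := continuous_motion (z := fun e : U => normPoint e.1)
      (fun p => (continuous_normPoint p).comp continuous_subtype_val) S a k
    have hpoint (p) : Continuous fun y : U × I => point y.1.1 p :=
      (continuous_point p).comp (continuous_subtype_val.comp continuous_fst)
    simp only [Z, AffineMap.lineMap_apply_ring']
    fun_prop
  let H (a : Fin r) : C(U × I, Conf 2 (q + 2 + n)) :=
    ⟨fun y => ofCoord (Z a y) (hZ a y), continuous_ofCoord (hZ a) (hcont a)⟩
  refine hasLocalSection_paramEval H (fun e => H 0 (e, 1)) (fun a e => conf_ext fun k => ?_)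
    (fun a e => conf_ext fun k => ?_) fun a e t => fnProj_eq_iff.mpr fun i => ?_
  · simp only [H, Z, ContinuousMap.coe_mk, coord_ofCoord, motion_zero, Function.comp_apply,
      lineMap_normPoint]
    exact congrFun (point_comp_pointLabel e.1 a) k
  · simp only [H, Z, ContinuousMap.coe_mk, coord_ofCoord, motion_one_eq a 0]
  · simp only [H, Z, ContinuousMap.coe_mk, coord_ofCoord, motion_castAdd, lineMap_normPoint]
    rfl

theorem hasSecatLE_paramEval :
    HasSecatLE (paramEval (fnProj 2 (q + 2) n) r) (r * n + q) := by
  refine hasSecatLE_of_strata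
    (fun S : {S : Setoid (PointIndex (q + 2) n r) // 2 ≤ Nat.card (Quotient S)} =>
      {e | IsStratified S.1 (normPoint e)})
    (fun S => Nat.card (Quotient S.1) - 2) (fun S => ?_)
    (fun S => isOpen_setOf_isStratified continuous_normPoint S.1)
    (fun e => ⟨⟨_, two_le_card_quotient_ker_re_normPoint e⟩,
      isStratified_ker (normPoint_comp_pointLabel_injective e)⟩)
    (fun S S' hcard hne => disjoint_left.mpr fun e he he' => hne (Subtype.ext ?_))
    fun S => hasLocalSection_isStratified S.1
  · have hcard := Nat.card_le_card_of_surjective (Quotient.mk S.1) Quotient.mk_surjective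
    simp only [Nat.card_eq_fintype_card, Fintype.card_sum, Fintype.card_prod, Fintype.card_fin]
      at hcard ⊢
    lia
  · have hS := S.2
    have hS' := S'.2
    exact he.1.eq_of_card_quotient_eq he'.1 (by lia)

end UpperBound

end FadellNeuwirth

/-- For the planar Fadell–Neuwirth fibration (`d = 2`), with `m ≥ 2`, `n ≥ 1`,
`r ≥ 2`: `TC_r[p] = rn + m - 2`. -/
theorem stmt17 (m n r : ℕ) (hm : 2 ≤ m) (hn : 1 ≤ n) (hr : 2 ≤ r) :
    seqParamTC (fnProj 2 m n) r = ((r * n + m - 2 : ℕ) : ℕ∞) := by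
  obtain ⟨q, rfl⟩ := Nat.exists_eq_add_of_le' hm
  obtain ⟨s, rfl⟩ := Nat.exists_eq_add_of_le' hr
  have : NeZero n := ⟨Nat.one_le_iff_ne_zero.mp hn⟩
  rw [show (s + 2) * n + (q + 2) - 2 = (s + 2) * n + q by omega]
  refine le_antisymm (iInf₂_le _ FadellNeuwirth.hasSecatLE_paramEval) (le_iInf₂ fun k hk => ?_)
  exact mod_cast FadellNeuwirth.le_of_hasSecatLE_paramEval hk
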